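/- Let 𝓓 = (Ω, 𝓑) be a β(i) design with parameter (v, k, d), where i ≥ 3 and v ≥ 2k. If 𝓓 is not a β(i−1) design, then 2(i−1) ≤ k−d < i·(3i−2+√(i²+12i−12))/(2(i−2)); in particular, if i ≥ 8 then 2(i−1) ≤ k−d ≤ 2i+6. -/

import Mathlib

open Finset

variable {α : Type*} [Fintype α] [DecidableEq α]

/-- `𝓑` is a design on the finite type `α` of cardinality `v`, with block size `k` and
maximal pairwise block intersection size `d`. -/
def IsDesign (𝓑 : Finset (Finset α)) (v k d : ℕ) : Prop :=
  Fintype.card α = v ∧ 2 ≤ 𝓑.card ∧ d < k ∧ k < v ∧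
  (∀ B ∈ 𝓑, B.card = k) ∧
  (∀ B ∈ 𝓑, ∀ C ∈ 𝓑, B ≠ C → (B ∩ C).card ≤ d) ∧
  (∃ B ∈ 𝓑, ∃ C ∈ 𝓑, B ≠ C ∧ (B ∩ C).card = d)

/-- `𝓑` is a `β(i)` design with parameters `(v, k, d)`: a design such that
`1 ≤ i ≤ (v - d + 1)/2` and every `(d + 2i - 1)`-element subset `X` of `Ω` admits a
unique block `B` with `|X ∩ B| ≥ d + i`. -/
def IsBetaDesign (𝓑 : Finset (Finset α)) (v k d i : ℕ) : Prop :=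
  IsDesign 𝓑 v k d ∧ 1 ≤ i ∧ 2 * i ≤ v - d + 1 ∧
  ∀ X : Finset α, X.card = d + 2 * i - 1 →
    ∃! B, B ∈ 𝓑 ∧ d + i ≤ (X ∩ B).card

/-!
A `β(i)` design is a perfect code in the Johnson graph `J(v, N)` with `N = d + 2i - 1`: every vertex
is at distance at most `i - 1` from exactly one block. The distance to a fixed block performs a
birth-death walk, and a root `μ` of its Lloyd polynomial lets the solution of the eigenvalue
equation, read at the distance to the nearest block, become an eigenfunction of the Laplacian of
`J(v, N)`. All Lloyd roots are therefore Laplacian eigenvalues, which are the numbers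
`j (v + 1 - j)` with `j ≤ N`.

If the design is not a `β(i - 1)` design, some `(d + 2i - 3)`-set meets no block in more than
`d + i - 2` points, and double counting around it bounds `v` from above. Double counting around a
suitable `(d + 2i)`-set bounds `v` from below. If `k - d` were as large as the excluded values,
these bounds would give the Lloyd polynomial opposite signs at the eigenvalues with `j = N - 2` and
`j = N - 1`, hence a root strictly between them, where there is no eigenvalue.
-/

section JohnsonGraph

variable {R : Type*} [CommRing R]

/-- The Laplacian of the Johnson graph, acting on functions of the subsets of `α`; subsets of
all sizes are treated at once, since exchanging an element preserves the size. -/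
def johnsonLaplacian (F : Finset α → R) (X : Finset α) : R :=
  ∑ x ∈ X, ∑ y ∈ Xᶜ, (F X - F (insert y (X.erase x)))

/-- The operator from functions on `(N + 1)`-subsets to functions on `N`-subsets which sums `F`
over the supersets with one more element. -/
def upperSum (F : Finset α → R) (W : Finset α) : R := ∑ y ∈ Wᶜ, F (insert y W)

/-- The adjoint of `upperSum`, summing `F` over the subsets with one element fewer. -/
def lowerSum (F : Finset α → R) (X : Finset α) : R := ∑ x ∈ X, F (X.erase x)

lemma lowerSum_upperSum (F : Finset α → R) (X : Finset α) :
    lowerSum (upperSum F) X = #X * (#Xᶜ + 1) * F X - johnsonLaplacian F X := by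
  have expand : ∀ x ∈ X, ∑ y ∈ (X.erase x)ᶜ, F (insert y (X.erase x)) =
      F X + ∑ y ∈ Xᶜ, F (insert y (X.erase x)) := by
    intro x hx
    rw [compl_erase, sum_insert (by simpa using hx), insert_erase hx]
  simp only [lowerSum, upperSum, johnsonLaplacian, sum_congr rfl expand, sum_add_distrib,
    sum_sub_distrib, sum_const, nsmul_eq_mul]
  ring

lemma upperSum_lowerSum (F : Finset α → R) (X : Finset α) :
    upperSum (lowerSum F) X = #Xᶜ * (#X + 1) * F X - johnsonLaplacian F X := by
  have expand : ∀ y ∈ Xᶜ, ∑ x ∈ insert y X, F ((insert y X).erase x) =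
      F X + ∑ x ∈ X, F (insert y (X.erase x)) := by
    intro y hy
    have hyX : y ∉ X := mem_compl.1 hy
    rw [sum_insert hyX, erase_insert hyX]
    congr 1
    refine sum_congr rfl fun x hx => ?_
    rw [erase_insert_of_ne (ne_of_mem_of_not_mem hx hyX).symm]
  rw [johnsonLaplacian, sum_comm]
  simp only [lowerSum, upperSum, sum_congr rfl expand, sum_add_distrib,
    sum_sub_distrib, sum_const, nsmul_eq_mul]
  ring

/-- With `U = upperSum` and `D = lowerSum`, the operators `D U` on `(N + 1)`-subsets and `U D` on
`N`-subsets differ from minus the Laplacian by the same scalar, so the two ways of bracketing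
`U D U` give the commutation. -/
lemma johnsonLaplacian_upperSum (F : Finset α → R) (W : Finset α) :
    johnsonLaplacian (upperSum F) W = upperSum (johnsonLaplacian F) W := by
  have inner : upperSum (lowerSum (upperSum F)) W =
      #Wᶜ * (#W + 1) * upperSum F W - upperSum (johnsonLaplacian F) W := by
    rw [upperSum, upperSum, upperSum, mul_sum, ← sum_sub_distrib]
    refine sum_congr rfl fun y hy => ?_
    have hup : (#(insert y W) : R) = #W + 1 := by
      rw [card_insert_of_notMem (mem_compl.1 hy), Nat.cast_succ]
    have hcompl : (#(insert y W)ᶜ : R) + 1 = #Wᶜ := by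
      rw [compl_insert, ← Nat.cast_add_one, card_erase_add_one hy]
    rw [lowerSum_upperSum, hup, hcompl]
    ring
  linear_combination upperSum_lowerSum (upperSum F) W - inner

/-- An eigenfunction on `(N + 1)`-subsets either goes to a nonzero eigenfunction on `N`-subsets
under `upperSum`, or is killed by it, in which case it belongs to `j = N + 1`. -/
theorem exists_eq_of_johnsonLaplacian_eigenfunction [NoZeroDivisors R] {N : ℕ} {μ : R}
    {F : Finset α → R} (hF : ∀ X, #X = N → johnsonLaplacian F X = μ * F X)
    (hne : ∃ X, #X = N ∧ F X ≠ 0) :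
    ∃ j ≤ N, μ = j * (Fintype.card α + 1 - j) := by
  induction N generalizing F with
  | zero =>
    obtain ⟨X, hX, hFX⟩ := hne
    have hzero : μ * F X = 0 := by
      rw [← hF X hX, card_eq_zero.1 hX, johnsonLaplacian, sum_empty]
    exact ⟨0, le_rfl, by simpa using (mul_eq_zero.1 hzero).resolve_right hFX⟩
  | succ N ih =>
    by_cases hup : ∃ W, #W = N ∧ upperSum F W ≠ 0
    · obtain ⟨j, hj, hμ⟩ := ih (F := upperSum F) (fun W hW => by
        rw [johnsonLaplacian_upperSum, upperSum, upperSum, mul_sum]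
        refine sum_congr rfl fun y hy => hF _ ?_
        rw [card_insert_of_notMem (mem_compl.1 hy), hW]) hup
      exact ⟨j, hj.trans N.le_succ, hμ⟩
    · push Not at hup
      obtain ⟨X, hX, hFX⟩ := hne
      have hlower : lowerSum (upperSum F) X = 0 :=
        sum_eq_zero fun x hx => hup _ (by rw [card_erase_of_mem hx, hX, Nat.add_sub_cancel])
      have hcard : (#X : R) + #Xᶜ = Fintype.card α := by
        rw [← card_add_card_compl X, Nat.cast_add]
      have hXR : (#X : R) = (N + 1 : ℕ) := by rw [hX]
      rw [lowerSum_upperSum, hF X hX, ← sub_mul] at hlower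
      refine ⟨N + 1, le_rfl, ?_⟩
      have := (mul_eq_zero.1 hlower).resolve_right hFX
      rw [← hcard, ← hXR]
      linear_combination -this

end JohnsonGraph

section Exchange

variable {β : Type*} [DecidableEq β]

lemma card_exchange_sdiff {X : Finset β} {x y : β} (hx : x ∈ X) (hy : y ∉ X) (B : Finset β) :
    #(insert y (X.erase x) \ B) + (if x ∈ B then 0 else 1) =
      #(X \ B) + (if y ∈ B then 0 else 1) := by
  have herase : #(X.erase x \ B) + (if x ∈ B then 0 else 1) = #(X \ B) := by
    rw [erase_sdiff_comm]
    split_ifs with hxB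
    · rw [erase_eq_of_notMem (by simp [hxB]), add_zero]
    · rw [card_erase_add_one (mem_sdiff.2 ⟨hx, hxB⟩)]
  have hinsert : #(insert y (X.erase x) \ B) = #(X.erase x \ B) + (if y ∈ B then 0 else 1) := by
    split_ifs with hyB
    · rw [insert_sdiff_of_mem _ hyB, add_zero]
    · rw [insert_sdiff_of_notMem _ hyB, card_insert_of_notMem (by simp [hy])]
  omega

lemma card_exchange_sdiff_le {X : Finset β} {x y : β} (hx : x ∈ X) (hy : y ∉ X) (B : Finset β) :
    #(insert y (X.erase x) \ B) ≤ #(X \ B) + 1 := by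
  have := card_exchange_sdiff hx hy B
  split_ifs at this <;> omega

lemma card_insert_erase_of_mem_of_notMem {X : Finset β} {x y : β} (hx : x ∈ X) (hy : y ∉ X) :
    #(insert y (X.erase x)) = #X := by
  rw [card_insert_of_notMem (by simp [hy]), card_erase_add_one hx]

end Exchange

/-- The distance `s` to a fixed set `B` performs a birth-death walk on the Johnson graph. -/
lemma johnsonLaplacian_comp_card_sdiff {R : Type*} [CommRing R] (g : ℕ → R) (B X : Finset α) :
    johnsonLaplacian (fun Y => g #(Y \ B)) X =
      #(X ∩ B) * #(Xᶜ \ B) * (g #(X \ B) - g (#(X \ B) + 1)) +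
        #(X \ B) * #(Xᶜ ∩ B) * (g #(X \ B) - g (#(X \ B) - 1)) := by
  set up : R := g #(X \ B) - g (#(X \ B) + 1)
  set down : R := g #(X \ B) - g (#(X \ B) - 1)
  have term : ∀ x ∈ X, ∀ y ∈ Xᶜ, g #(X \ B) - g #(insert y (X.erase x) \ B) =
      (if x ∈ B then 1 else 0) * (if y ∉ B then 1 else 0) * up +
        (if x ∉ B then 1 else 0) * (if y ∈ B then 1 else 0) * down := by
    intro x hx y hy
    have hcard := card_exchange_sdiff hx (mem_compl.1 hy) B
    by_cases hxB : x ∈ B <;> by_cases hyB : y ∈ B <;>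
      simp only [hxB, hyB, if_true, if_false, not_true, not_false_eq_true] at hcard ⊢
    · rw [Nat.add_right_cancel hcard]; ring
    · rw [show #(insert y (X.erase x) \ B) = #(X \ B) + 1 from hcard]; ring
    · rw [show #(insert y (X.erase x) \ B) = #(X \ B) - 1 by omega]; ring
    · rw [Nat.add_right_cancel hcard]; ring
  rw [johnsonLaplacian, sum_congr rfl fun x hx => sum_congr rfl (term x hx)]
  simp only [sum_add_distrib, ← sum_mul, ← mul_sum, sum_boole, filter_mem_eq_inter,
    filter_notMem_eq_sdiff]

section BirthDeath

variable {K : Type*} [Field K] (u d : ℕ → K) (μ : K)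

/-- The stationary weights `W s` of the birth-death walk with up-rates `u` and down-rates `d`,
determined by detailed balance `W (s + 1) * d (s + 1) = W s * u s`. -/
def birthDeathWeight (s : ℕ) : K := ∏ r ∈ range s, u r / d (r + 1)

/-- The partial sums `∑ r < s, W r * c r`, where `c` is the solution with `c 0 = 1` of the
eigenvalue equation at `μ` of the birth-death walk with up-rates `u` and down-rates `d`. As a
function of `μ` it is the Lloyd polynomial of degree `s - 1`. -/
def birthDeathSum : ℕ → K
  | 0 => 0
  | 1 => 1
  | s + 2 => birthDeathSum (s + 1) +
      (u s * (birthDeathSum (s + 1) - birthDeathSum s) - μ * birthDeathSum (s + 1)) / d (s + 1)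

variable {u d μ}

lemma birthDeathWeight_succ_mul {s : ℕ} (hd : d (s + 1) ≠ 0) :
    birthDeathWeight u d (s + 1) * d (s + 1) = birthDeathWeight u d s * u s := by
  rw [birthDeathWeight, prod_range_succ, mul_assoc, div_mul_cancel₀ _ hd, birthDeathWeight]

lemma birthDeathWeight_ne_zero {s : ℕ} (hu : ∀ r < s, u r ≠ 0) (hd : ∀ r < s, d (r + 1) ≠ 0) :
    birthDeathWeight u d s ≠ 0 :=
  prod_ne_zero_iff.2 fun r hr =>
    div_ne_zero (hu r (mem_range.1 hr)) (hd r (mem_range.1 hr))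

lemma mul_birthDeathSum_add_two {s : ℕ} (hd : d (s + 1) ≠ 0) :
    d (s + 1) * (birthDeathSum u d μ (s + 2) - birthDeathSum u d μ (s + 1)) =
      u s * (birthDeathSum u d μ (s + 1) - birthDeathSum u d μ s) -
        μ * birthDeathSum u d μ (s + 1) := by
  rw [birthDeathSum, add_sub_cancel_left, mul_div_cancel₀ _ hd]

lemma continuous_birthDeathSum (u d : ℕ → ℝ) (s : ℕ) :
    Continuous fun μ => birthDeathSum u d μ s := by
  induction s using Nat.twoStepInduction with
  | zero | one => simp only [birthDeathSum, continuous_const]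
  | more s ih₀ ih₁ =>
    simp only [birthDeathSum]
    fun_prop

/-- At a zero of `birthDeathSum` the flux through the top state vanishes, so the solution of the
eigenvalue equation may be continued past `p` by a constant. -/
lemma exists_birthDeath_eigenvector {p : ℕ} (hd₀ : d 0 = 0) (hu : ∀ s < p, u s ≠ 0)
    (hd : ∀ s < p, d (s + 1) ≠ 0) (hroot : birthDeathSum u d μ (p + 1) = 0) :
    ∃ c : ℕ → K, c 0 = 1 ∧ c (p + 1) = c p ∧
      ∀ s ≤ p, u s * (c s - c (s + 1)) + d s * (c s - c (s - 1)) = μ * c s := by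
  set T := birthDeathSum u d μ
  set W := birthDeathWeight u d
  have hW : ∀ s ≤ p, W s ≠ 0 := fun s hs =>
    birthDeathWeight_ne_zero (fun r hr => hu r (hr.trans_le hs)) fun r hr => hd r (hr.trans_le hs)
  set c : ℕ → K := fun s => (T (min s p + 1) - T (min s p)) / W (min s p)
  have hWc : ∀ s ≤ p, W s * c s = T (s + 1) - T s := by
    intro s hs
    simp only [c, min_eq_left hs]
    exact mul_div_cancel₀ _ (hW s hs)
  have hc : c (p + 1) = c p := by simp only [c, min_self, min_eq_right p.le_succ]
  have flux : ∀ s ≤ p, W s * (u s * (c s - c (s + 1))) = μ * T (s + 1) := by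
    intro s hs
    obtain rfl | hlt := hs.eq_or_lt
    · rw [hc, hroot, sub_self, mul_zero, mul_zero, mul_zero]
    · linear_combination u s * hWc s hs - d (s + 1) * hWc (s + 1) hlt
        + c (s + 1) * birthDeathWeight_succ_mul (u := u) (hd s hlt)
        - mul_birthDeathSum_add_two (u := u) (μ := μ) (hd s hlt)
  refine ⟨c, ?_, hc, fun s hs => mul_left_cancel₀ (hW s hs) ?_⟩
  · simp [c, T, W, birthDeathSum, birthDeathWeight]
  · cases s with
    | zero =>
      have hT : T 0 = 0 := by simp only [T, birthDeathSum]
      linear_combination flux 0 hs + W 0 * (c 0 - c (0 - 1)) * hd₀ - μ * hWc 0 hs + μ * hT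
    | succ s =>
      rw [Nat.add_sub_cancel]
      linear_combination flux (s + 1) hs - flux s (Nat.le_of_succ_le hs) - μ * hWc (s + 1) hs
        + (c (s + 1) - c s) * birthDeathWeight_succ_mul (u := u) (hd s hs)

end BirthDeath

section Lloyd

/-- The number of ways to move an `N`-subset at distance `s` from a given block one step further
away by an exchange, where `q` is the number of points outside the block. -/
def johnsonUp (N q : ℝ) (s : ℕ) : ℝ := (N - s) * (q - s)

/-- The number of ways to move an `N`-subset at distance `s` from a given block of size `N + a`
one step closer by an exchange. -/
def johnsonDown (a : ℝ) (s : ℕ) : ℝ := s * (a + s)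

lemma johnsonLaplacian_comp_card_sdiff_eq_birthDeath (g : ℕ → ℝ) (B X : Finset α) :
    johnsonLaplacian (fun Y => g #(Y \ B)) X =
      johnsonUp #X (Fintype.card α - #B) #(X \ B) * (g #(X \ B) - g (#(X \ B) + 1)) +
        johnsonDown (#B - #X) #(X \ B) * (g #(X \ B) - g (#(X \ B) - 1)) := by
  have hX : (#(X ∩ B) : ℝ) + #(X \ B) = #X := mod_cast card_inter_add_card_sdiff X B
  have hXc : (#(Xᶜ ∩ B) : ℝ) + #(Xᶜ \ B) = #Xᶜ := mod_cast card_inter_add_card_sdiff Xᶜ B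
  have hB : (#(X ∩ B) : ℝ) + #(Xᶜ ∩ B) = #B := by
    rw [inter_comm X, inter_comm Xᶜ, ← sdiff_eq_inter_compl]
    exact_mod_cast card_inter_add_card_sdiff B X
  have huniv : (#X : ℝ) + #Xᶜ = Fintype.card α := mod_cast card_add_card_compl X
  rw [johnsonLaplacian_comp_card_sdiff, johnsonUp, johnsonDown,
    show (#(X ∩ B) : ℝ) = #X - #(X \ B) by linarith,
    show (#(Xᶜ ∩ B) : ℝ) = #B - #X + #(X \ B) by linarith,
    show (#(Xᶜ \ B) : ℝ) = Fintype.card α - #B - #(X \ B) by linarith]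

lemma cast_choose_succ_mul {R : Type*} [CommRing R] (n s : ℕ) :
    (n.choose (s + 1) : R) * (s + 1) = n.choose s * (n - s) := by
  rcases le_or_gt s n with hs | hs
  · rw [← Nat.cast_sub hs]
    exact_mod_cast congrArg (Nat.cast (R := R)) (Nat.choose_succ_right_eq n s)
  · simp [Nat.choose_eq_zero_of_lt hs, Nat.choose_eq_zero_of_lt (hs.trans s.lt_succ_self)]

/-- Up to a nonzero factor, the Lloyd polynomial of degree `x` of the `(x + y + 1)`-subsets at the
Laplacian eigenvalue with `j = x + y - 1`, for blocks which have `a` points more than these subsets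
and miss `x + y + e - 1` points. -/
def lloydQuadratic (a e x y : ℝ) : ℝ :=
  (a + 2) * (a + 1) * y * (y - 1) - 2 * (a + 2) * e * x * y + e * (e - 1) * x * (x - 1)

variable {q a : ℝ}

lemma johnsonUp_pos {N : ℝ} {s : ℕ} (hN : s < N) (hq : s < q) : 0 < johnsonUp N q s :=
  mul_pos (sub_pos.2 hN) (sub_pos.2 hq)

lemma johnsonDown_succ_pos (ha : 0 ≤ a) (s : ℕ) : 0 < johnsonDown a (s + 1) := by
  rw [johnsonDown]; positivity

/-- Writing the partial sums as `(-1) ^ s * n.choose s * E s` turns their recurrence into the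
difference equation `hE`, which has polynomial solutions at the Laplacian eigenvalues. -/
lemma birthDeathSum_johnson_eq (ha : 0 ≤ a) (n : ℕ) {μ : ℝ} {E : ℝ → ℝ}
    (hE : ∀ x, (a + x + 1) * (n - x) * E (x + 1) +
      ((x + 1) * (a + x + 1) + (n + 1 - x) * (q - x) - μ) * E x + x * (q - x) * E (x - 1) = 0)
    (s : ℕ) :
    E 0 * birthDeathSum (johnsonUp (n + 1) q) (johnsonDown a) μ (s + 1) =
      (-1) ^ s * n.choose s * E s := by
  have hd (r : ℕ) := (johnsonDown_succ_pos ha r).ne'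
  have hrec (r : ℕ) := mul_birthDeathSum_add_two (u := johnsonUp (n + 1) q) (μ := μ) (hd r)
  simp only [johnsonUp, johnsonDown] at hd hrec ⊢
  induction s using Nat.twoStepInduction with
  | zero => simp [birthDeathSum]
  | one =>
    refine mul_left_cancel₀ (hd 0) ?_
    have h₀ := hrec 0
    have hE₀ := hE 0
    simp only [birthDeathSum.eq_1, birthDeathSum.eq_2, zero_add, Nat.choose_one_right]
      at h₀ hE₀ ⊢
    push_cast at h₀ ⊢
    linear_combination E 0 * h₀ + hE₀
  | more s ih₀ ih₁ =>
    refine mul_left_cancel₀ (hd (s + 1)) ?_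
    have hrec := hrec (s + 1)
    have hC₁ := cast_choose_succ_mul (R := ℝ) n s
    have hC₂ := cast_choose_succ_mul (R := ℝ) n (s + 1)
    have hE := hE (s + 1)
    rw [add_sub_cancel_right, add_assoc (s : ℝ) 1 1, one_add_one_eq_two] at hE
    push_cast [pow_succ] at hrec ih₀ ih₁ hC₂ ⊢
    linear_combination E 0 * hrec
      + ((s + 2) * (a + s + 2) + (n - s) * (q - s - 1) - μ) * ih₁
      - (n - s) * (q - s - 1) * ih₀
      - (-1) ^ s * (a + s + 2) * E (s + 2) * hC₂
      + (-1) ^ s * (q - s - 1) * E s * hC₁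
      - (-1) ^ s * n.choose (s + 1) * hE

/-- The Lloyd polynomial of the `(n + 1)`-subsets at the Laplacian eigenvalue with `j = n`. -/
lemma birthDeathSum_johnson_penultimate (ha : 0 ≤ a) (n s : ℕ) :
    (a + 1) * n * birthDeathSum (johnsonUp (n + 1) q) (johnsonDown a) (n * (q + a + 2)) (s + 1) =
      (-1) ^ s * n.choose s * ((a + 1) * (n - s) - (q - n) * s) := by
  have h := birthDeathSum_johnson_eq (q := q) (μ := n * (q + a + 2)) ha n
    (E := fun x => (a + 1) * (n - x) - (q - n) * x) (fun x => by ring) s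
  linear_combination h

/-- The Lloyd polynomial of the `(n + 1)`-subsets at the Laplacian eigenvalue with `j = n - 1`. -/
lemma birthDeathSum_johnson_antepenultimate (ha : 0 ≤ a) (n s : ℕ) :
    (a + 2) * (a + 1) * n * (n - 1) *
        birthDeathSum (johnsonUp (n + 1) q) (johnsonDown a) ((n - 1) * (q + a + 3)) (s + 1) =
      (-1) ^ s * n.choose s * lloydQuadratic a (q - n + 1) s (n - s) := by
  have h := birthDeathSum_johnson_eq (q := q) (μ := (n - 1) * (q + a + 3)) ha n
    (E := fun x => lloydQuadratic a (q - n + 1) x (n - x))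
    (fun x => by simp only [lloydQuadratic]; ring) s
  simp only [lloydQuadratic] at h ⊢
  linear_combination h

/-- Write `S` for the Lloyd polynomial. The two bounds make `(-1) ^ p * S` positive at the
eigenvalue with `j = n` and negative at the one with `j = n - 1`. -/
lemma exists_birthDeathSum_johnson_eq_zero {n p : ℕ} (hn : 2 ≤ n) (hp : p ≤ n) (ha : 0 ≤ a)
    (hgap : (n - 1) * (q + a + 3) ≤ n * (q + a + 2))
    (hpos : 0 < (a + 1) * (n - p) - (q - n) * p)
    (hneg : lloydQuadratic a (q - n + 1) p (n - p) < 0) :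
    ∃ μ, (n - 1) * (q + a + 3) < μ ∧ μ < n * (q + a + 2) ∧
      birthDeathSum (johnsonUp (n + 1) q) (johnsonDown a) μ (p + 1) = 0 := by
  set S : ℝ → ℝ := fun μ => birthDeathSum (johnsonUp (n + 1) q) (johnsonDown a) μ (p + 1)
  have hn' : (2 : ℝ) ≤ n := by exact_mod_cast hn
  have hchoose : (0 : ℝ) < n.choose p := by exact_mod_cast Nat.choose_pos hp
  have hsign : ((-1 : ℝ) ^ p) * (-1) ^ p = 1 := by rw [← mul_pow]; simp
  have upper : 0 < (-1) ^ p * S (n * (q + a + 2)) := by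
    refine pos_of_mul_pos_right (a := (a + 1) * n) ?_ (by positivity)
    calc 0 < n.choose p * ((a + 1) * (n - p) - (q - n) * p) := mul_pos hchoose hpos
      _ = (a + 1) * n * ((-1) ^ p * S (n * (q + a + 2))) := by
        linear_combination -(-1) ^ p * birthDeathSum_johnson_penultimate (q := q) ha n p
          - n.choose p * ((a + 1) * (n - p) - (q - n) * p) * hsign
  have lower : (-1) ^ p * S ((n - 1) * (q + a + 3)) < 0 := by
    refine neg_of_mul_neg_right (a := (a + 2) * (a + 1) * n * (n - 1)) ?_
      (mul_nonneg (by positivity) (by linarith))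
    refine lt_of_eq_of_lt ?_ (mul_neg_of_pos_of_neg hchoose hneg)
    linear_combination (-1) ^ p * birthDeathSum_johnson_antepenultimate (q := q) ha n p
      + n.choose p * lloydQuadratic a (q - n + 1) p (n - p) * hsign
  have hcont : Continuous fun μ => (-1) ^ p * S μ :=
    continuous_const.mul (continuous_birthDeathSum _ _ _)
  obtain ⟨μ, ⟨hlt, hgt⟩, hroot⟩ := intermediate_value_Ioo hgap hcont.continuousOn ⟨lower, upper⟩
  exact ⟨μ, hlt, hgt, (mul_eq_zero.1 hroot).resolve_left (by positivity)⟩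

end Lloyd

section PerfectCode

lemma mul_sub_self_le_mul_sub_self {w x y : ℝ} (hxy : x ≤ y) (hadd : x + y ≤ w) :
    x * (w - x) ≤ y * (w - y) := by
  linear_combination mul_nonneg (sub_nonneg.2 hxy) (sub_nonneg.2 hadd)

/-- `𝓑` is a perfect code correcting `p` errors in the Johnson graph of the `N`-subsets of `β`:
every `N`-subset is at distance at most `p` from a block, and its distances to two distinct blocks
always sum to more than `2 * p`. The distance from `X` to a block `B` is `#(X \ B)`; the size of
`B` may differ from `N`. -/
def IsPerfectCode {β : Type*} [DecidableEq β] (𝓑 : Finset (Finset β)) (N p : ℕ) : Prop :=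
  ∀ X, #X = N → (∃ B ∈ 𝓑, #(X \ B) ≤ p) ∧
    ∀ B ∈ 𝓑, ∀ C ∈ 𝓑, B ≠ C → 2 * p < #(X \ B) + #(X \ C)

namespace IsPerfectCode

lemma card_exchange_sdiff_eq_min {β : Type*} [DecidableEq β] {𝓑 : Finset (Finset β)} {N p : ℕ}
    (h : IsPerfectCode 𝓑 N p) {X B C : Finset β} {x y : β} (hX : #X = N) (hx : x ∈ X)
    (hy : y ∉ X) (hB : B ∈ 𝓑) (hC : C ∈ 𝓑) (hXB : #(X \ B) ≤ p)
    (hYC : #(insert y (X.erase x) \ C) ≤ p) :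
    #(insert y (X.erase x) \ C) = min #(insert y (X.erase x) \ B) p := by
  obtain rfl | hne := eq_or_ne B C
  · exact (min_eq_left hYC).symm
  · have hcard : #(insert y (X.erase x)) = N := by
      rw [card_insert_erase_of_mem_of_notMem hx hy, hX]
    have hsum := (h _ hcard).2 B hB C hC hne
    have hstep := card_exchange_sdiff_le hx hy B
    omega

lemma apply_card_exchange_sdiff_eq {β γ : Type*} [DecidableEq β] {𝓑 : Finset (Finset β)}
    {N p : ℕ} {c : ℕ → γ} (h : IsPerfectCode 𝓑 N p) (hc : c (p + 1) = c p) {X B C : Finset β}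
    {x y : β} (hX : #X = N) (hx : x ∈ X) (hy : y ∉ X) (hB : B ∈ 𝓑) (hC : C ∈ 𝓑)
    (hXB : #(X \ B) ≤ p) (hYC : #(insert y (X.erase x) \ C) ≤ p) :
    c #(insert y (X.erase x) \ C) = c #(insert y (X.erase x) \ B) := by
  have hmin := h.card_exchange_sdiff_eq_min hX hx hy hB hC hXB hYC
  obtain hle | hlt := le_or_gt #(insert y (X.erase x) \ B) p
  · rw [hmin, min_eq_left hle]
  · have hstep := card_exchange_sdiff_le hx hy B
    rw [hmin, min_eq_right hlt.le, show #(insert y (X.erase x) \ B) = p + 1 by omega, hc]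

variable {𝓑 : Finset (Finset α)} {N p k : ℕ} {μ : ℝ}

/-- Lloyd's theorem. The solution of the birth-death equation, read at the distance to the nearest
block, is an eigenfunction: between neighbours the nearest block changes only where the distance
would pass from `p` to `p + 1`, and there the solution is constant. -/
theorem exists_eq_of_birthDeathSum_eq_zero (h : IsPerfectCode 𝓑 N p) (hne : 𝓑.Nonempty)
    (hk : ∀ B ∈ 𝓑, #B = k) (hNk : N ≤ k) (hpN : p ≤ N) (hpk : p + k ≤ Fintype.card α)
    (hroot : birthDeathSum (johnsonUp N (Fintype.card α - k)) (johnsonDown (k - N)) μ (p + 1)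
      = 0) :
    ∃ j ≤ N, μ = j * (Fintype.card α + 1 - j) := by
  have hNk' : (0 : ℝ) ≤ k - N := sub_nonneg.2 (mod_cast hNk)
  have hup : ∀ s < p, johnsonUp N (Fintype.card α - k) s ≠ 0 := fun s hs =>
    (johnsonUp_pos (by exact_mod_cast hs.trans_le hpN)
      (lt_sub_iff_add_lt.2 (by exact_mod_cast (Nat.add_lt_add_right hs k).trans_le hpk))).ne'
  obtain ⟨c, hc₀, hcp, hc⟩ := exists_birthDeath_eigenvector (by simp [johnsonDown]) hup
    (fun s _ => (johnsonDown_succ_pos hNk' s).ne') hroot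
  choose! f hf𝓑 hfp using fun X hX => (h X hX).1
  refine exists_eq_of_johnsonLaplacian_eigenfunction (F := fun X => c #(X \ f X))
    (fun X hX => ?_) ?_
  · have neighbour : ∀ x ∈ X, ∀ y ∈ Xᶜ, c #(insert y (X.erase x) \ f (insert y (X.erase x))) =
        c #(insert y (X.erase x) \ f X) := by
      intro x hx y hy
      have hy := mem_compl.1 hy
      have hY := (card_insert_erase_of_mem_of_notMem hx hy).trans hX
      exact h.apply_card_exchange_sdiff_eq hcp hX hx hy (hf𝓑 X hX) (hf𝓑 _ hY) (hfp X hX)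
        (hfp _ hY)
    calc johnsonLaplacian (fun Y => c #(Y \ f Y)) X
        = johnsonLaplacian (fun Y => c #(Y \ f X)) X :=
          sum_congr rfl fun x hx => sum_congr rfl fun y hy =>
            congrArg (c #(X \ f X) - ·) (neighbour x hx y hy)
      _ = johnsonUp N (Fintype.card α - k) #(X \ f X) * (c #(X \ f X) - c (#(X \ f X) + 1)) +
          johnsonDown (k - N) #(X \ f X) * (c #(X \ f X) - c (#(X \ f X) - 1)) := by
        rw [johnsonLaplacian_comp_card_sdiff_eq_birthDeath, hX, hk _ (hf𝓑 X hX)]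
      _ = μ * c #(X \ f X) := hc _ (hfp X hX)
  · obtain ⟨B, hB⟩ := hne
    obtain ⟨X, hXB, hX⟩ := exists_subset_card_eq (hNk.trans_eq (hk B hB).symm)
    have hfX : f X = B := by
      by_contra hfX
      have := (h X hX).2 _ (hf𝓑 X hX) B hB hfX
      rw [card_eq_zero.2 (sdiff_eq_empty_iff_subset.2 hXB)] at this
      have := hfp X hX
      omega
    refine ⟨X, hX, ?_⟩
    simp only [hfX, sdiff_eq_empty_iff_subset.2 hXB, card_empty, hc₀, ne_eq, one_ne_zero,
      not_false_eq_true]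

/-- The two quantities are the Lloyd polynomial at consecutive eigenvalues, up to a common sign. If
they had opposite signs the polynomial would have a root between these eigenvalues. -/
lemma lloyd_antepenultimate_nonneg {n : ℕ} (h : IsPerfectCode 𝓑 (n + 1) p) (hne : 𝓑.Nonempty)
    (hk : ∀ B ∈ 𝓑, #B = k) (hn : 2 ≤ n) (hnk : n + 1 ≤ k) (hpn : p ≤ n)
    (hpk : p + k ≤ Fintype.card α) (hcard : 2 * (n + 1) ≤ Fintype.card α) {a q : ℝ}
    (ha : a = k - (n + 1)) (hq : q = Fintype.card α - k)
    (hpos : 0 < (a + 1) * (n - p) - (q - n) * p) :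
    0 ≤ lloydQuadratic a (q - n + 1) p (n - p) := by
  have hcard' : 2 * ((n : ℝ) + 1) ≤ Fintype.card α := by exact_mod_cast hcard
  have hlower : ((n : ℝ) - 1) * (q + a + 3) = (n - 1) * (Fintype.card α + 1 - (n - 1)) := by
    rw [ha, hq]; ring
  have hupper : (n : ℝ) * (q + a + 2) = n * (Fintype.card α + 1 - n) := by rw [ha, hq]; ring
  by_contra! hneg
  obtain ⟨μ, hμ_gt, hμ_lt, hroot⟩ := exists_birthDeathSum_johnson_eq_zero hn hpn
    (ha ▸ sub_nonneg.2 (by exact_mod_cast hnk))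
    (by rw [hlower, hupper]; exact mul_sub_self_le_mul_sub_self (by linarith) (by linarith))
    hpos hneg
  obtain ⟨j, hj, rfl⟩ := h.exists_eq_of_birthDeathSum_eq_zero hne hk hnk
    (hpn.trans n.le_succ) hpk (by rw [Nat.cast_succ, ← ha, ← hq]; exact hroot)
  have hj' : (j : ℝ) ≤ n + 1 := by exact_mod_cast hj
  obtain hjn | hjn := lt_or_ge j n
  · have hjn' : (j : ℝ) + 1 ≤ n := by exact_mod_cast hjn
    exact (hμ_gt.trans_le (mul_sub_self_le_mul_sub_self (by linarith) (by linarith))).ne hlower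
  · have hjn' : (n : ℝ) ≤ j := by exact_mod_cast hjn
    exact (hμ_lt.trans_eq hupper).not_ge
      (mul_sub_self_le_mul_sub_self hjn' (by linarith))

end IsPerfectCode

end PerfectCode

section Packing

lemma card_mul_le_card_of_pairwiseDisjoint {ι β : Type*} {s : Finset ι} {f : ι → Finset β}
    {t : Finset β} {m : ℕ} (hsub : ∀ j ∈ s, f j ⊆ t) (hm : ∀ j ∈ s, m ≤ #(f j))
    (hdisj : (s : Set ι).PairwiseDisjoint f) : #s * m ≤ #t := by
  classical
  calc #s * m ≤ ∑ j ∈ s, #(f j) := card_nsmul_le_sum s _ m hm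
    _ = #(s.biUnion f) := (card_biUnion hdisj).symm
    _ ≤ #t := card_le_card (biUnion_subset.2 hsub)

variable {β : Type*} [DecidableEq β] {X B C : Finset β}

lemma card_inter_add_card_inter (X B C : Finset β) :
    #(X ∩ B) + #(X ∩ C) = #(X ∩ (B ∪ C)) + #(X ∩ (B ∩ C)) := by
  rw [inter_union_distrib_left, inter_inter_distrib_left, card_union_add_card_inter]

lemma card_inter_add_card_inter_le (X B C : Finset β) :
    #(X ∩ B) + #(X ∩ C) ≤ #X + #(B ∩ C) := by
  rw [card_inter_add_card_inter]
  exact add_le_add (card_le_card inter_subset_left) (card_le_card inter_subset_right)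

lemma disjoint_sdiff_left_of_card_le
    (h : #X + #(X ∩ (B ∩ C)) ≤ #(X ∩ B) + #(X ∩ C)) : Disjoint (X \ B) (X \ C) := by
  rw [card_inter_add_card_inter, add_le_add_iff_right] at h
  have hX : X ⊆ B ∪ C := inter_eq_left.1 (eq_of_subset_of_card_le inter_subset_left h)
  rw [disjoint_iff_inter_eq_empty, ← sdiff_union_distrib, sdiff_eq_empty_iff_subset.2 hX]

lemma disjoint_sdiff_right_of_card_le (h : #X + #(B ∩ C) ≤ #(X ∩ B) + #(X ∩ C)) :
    Disjoint (B \ X) (C \ X) := by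
  rw [card_inter_add_card_inter] at h
  have hX : B ∩ C ⊆ X := inter_eq_right.1 <| eq_of_subset_of_card_le inter_subset_right <| by
    have := card_le_card (inter_subset_left : X ∩ (B ∪ C) ⊆ X)
    omega
  exact disjoint_left.2 fun z hzB hzC =>
    (mem_sdiff.1 hzB).2 (hX (mem_inter.2 ⟨(mem_sdiff.1 hzB).1, (mem_sdiff.1 hzC).1⟩))

lemma card_insert_inter {x : β} (hx : x ∉ X) (B : Finset β) :
    #(insert x X ∩ B) = #(X ∩ B) + if x ∈ B then 1 else 0 := by
  split_ifs with hxB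
  · rw [insert_inter_of_mem hxB, card_insert_of_notMem (by simp [hx])]
  · rw [insert_inter_of_notMem hxB, add_zero]

/-- The blocks through the point `ω` which meet `X` in `m` points. -/
def blocksThrough (𝓑 : Finset (Finset β)) (ω : β) (X : Finset β) (m : ℕ) :
    Finset (Finset β) := {B ∈ 𝓑 | ω ∈ B ∧ #(X ∩ B) = m}

variable {𝓑 : Finset (Finset β)} {d k m e : ℕ} {ω : β}

lemma card_blocksThrough_mul_le (hd : ∀ B ∈ 𝓑, ∀ C ∈ 𝓑, B ≠ C → #(B ∩ C) ≤ d)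
    (hω : ω ∉ X) (hX : #X = m + e) (hm : #X + d ≤ 2 * m + 1) :
    #(blocksThrough 𝓑 ω X m) * e ≤ #X := by
  refine card_mul_le_card_of_pairwiseDisjoint (f := (X \ ·)) (fun _ _ => sdiff_subset) ?_ ?_
  · intro B hB
    have := card_inter_add_card_sdiff X B
    have hB := (mem_filter.1 hB).2.2
    omega
  · intro B hB C hC hBC
    obtain ⟨hB𝓑, hωB, hXB⟩ := mem_filter.1 hB
    obtain ⟨hC𝓑, hωC, hXC⟩ := mem_filter.1 hC
    have hinter : X ∩ (B ∩ C) ⊂ B ∩ C :=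
      ⟨inter_subset_right, fun h => hω (mem_inter.1 (h (mem_inter.2 ⟨hωB, hωC⟩))).1⟩
    have hlt := (card_lt_card hinter).trans_le (hd B hB𝓑 C hC𝓑 hBC)
    exact disjoint_sdiff_left_of_card_le (by omega)

lemma card_compl_le_card_blocksThrough_mul {𝓑 : Finset (Finset α)} {X : Finset α} {ω : α}
    {m r : ℕ} (hk : ∀ B ∈ 𝓑, #B = m + 1 + r) (hω : ω ∉ X) (hX : ∀ B ∈ 𝓑, #(X ∩ B) ≤ m)
    (hcover : ∀ y ∉ X, y ≠ ω → ∃ B ∈ 𝓑, m + 2 ≤ #(insert y (insert ω X) ∩ B)) :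
    #Xᶜ ≤ #(blocksThrough 𝓑 ω X m) * r + 1 := by
  have hsub : Xᶜ.erase ω ⊆ (blocksThrough 𝓑 ω X m).biUnion (· \ insert ω X) := by
    intro y hy
    obtain ⟨hyω, hyX⟩ := mem_erase.1 hy
    obtain ⟨B, hB, hle⟩ := hcover y (mem_compl.1 hyX) hyω
    have hyωX : y ∉ insert ω X := by simp [hyω, mem_compl.1 hyX]
    rw [card_insert_inter hyωX, card_insert_inter hω] at hle
    have hXB := hX B hB
    have hωB : ω ∈ B := by
      by_contra hωB
      rw [if_neg hωB] at hle
      split_ifs at hle <;> omega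
    have hyB : y ∈ B := by
      by_contra hyB
      rw [if_pos hωB, if_neg hyB] at hle
      omega
    rw [if_pos hωB, if_pos hyB] at hle
    exact mem_biUnion.2 ⟨B, mem_filter.2 ⟨hB, hωB, by omega⟩, mem_sdiff.2 ⟨hyB, hyωX⟩⟩
  have hcard : #((blocksThrough 𝓑 ω X m).biUnion (· \ insert ω X)) ≤
      #(blocksThrough 𝓑 ω X m) * r := by
    refine card_biUnion_le_card_mul _ _ _ fun B hB => ?_
    obtain ⟨hB𝓑, hωB, hXB⟩ := mem_filter.1 hB
    have hinter := card_insert_inter hω B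
    have hsplit := card_inter_add_card_sdiff B (insert ω X)
    rw [if_pos hωB, hXB] at hinter
    rw [inter_comm, hinter, hk B hB𝓑] at hsplit
    exact (Nat.add_left_cancel hsplit).le
  rw [← card_erase_add_one (mem_compl.2 hω)]
  exact Nat.add_le_add_right ((card_le_card hsub).trans hcard) 1

/-- Double counting of the blocks which pass through a point `ω` and meet `X` in `m` points: their
complements in `X` are disjoint, and together they contain all points outside `X`. -/
lemma card_compl_mul_le {𝓑 : Finset (Finset α)} {X : Finset α} {d m e r : ℕ}
    (hd : ∀ B ∈ 𝓑, ∀ C ∈ 𝓑, B ≠ C → #(B ∩ C) ≤ d) (hk : ∀ B ∈ 𝓑, #B = m + 1 + r)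
    (hX : #X = m + e) (hm : #X + d ≤ 2 * m + 1) (hmax : ∀ B ∈ 𝓑, #(X ∩ B) ≤ m)
    (hcover : ∀ Y, #Y = #X + 2 → ∃ B ∈ 𝓑, m + 2 ≤ #(Y ∩ B)) :
    #Xᶜ * e ≤ #X * r + e := by
  obtain hXc | ⟨ω, hω⟩ := Xᶜ.eq_empty_or_nonempty
  · rw [hXc, card_empty, zero_mul]
    exact Nat.zero_le _
  replace hω := mem_compl.1 hω
  have hpacking := card_blocksThrough_mul_le hd hω hX hm
  have hcovering := card_compl_le_card_blocksThrough_mul hk hω hmax fun y hy hyω =>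
    hcover _ (by rw [card_insert_of_notMem (by simp [hy, hyω]), card_insert_of_notMem hω])
  calc #Xᶜ * e ≤ (#(blocksThrough 𝓑 ω X m) * r + 1) * e := Nat.mul_le_mul_right e hcovering
    _ = #(blocksThrough 𝓑 ω X m) * e * r + e := by ring
    _ ≤ #X * r + e := by gcongr

lemma card_filter_card_inter_mul_le {𝓑 : Finset (Finset α)} {Z : Finset α} {d m r : ℕ}
    (hd : ∀ B ∈ 𝓑, ∀ C ∈ 𝓑, B ≠ C → #(B ∩ C) ≤ d) (hk : ∀ B ∈ 𝓑, #B = m + r)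
    (hm : #Z + d ≤ 2 * m) :
    #{B ∈ 𝓑 | #(Z ∩ B) = m} * r ≤ #Zᶜ := by
  refine card_mul_le_card_of_pairwiseDisjoint (f := (· \ Z)) 
    (fun B _ z hz => mem_compl.2 (mem_sdiff.1 hz).2) ?_ ?_
  · intro B hB
    obtain ⟨hB𝓑, hZB⟩ := mem_filter.1 hB
    have := card_inter_add_card_sdiff B Z
    rw [inter_comm, hZB, hk B hB𝓑] at this
    exact (Nat.add_left_cancel this).ge
  · intro B hB C hC hBC
    obtain ⟨hB𝓑, hZB⟩ := mem_filter.1 hB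
    obtain ⟨hC𝓑, hZC⟩ := mem_filter.1 hC
    have := hd B hB𝓑 C hC𝓑 hBC
    exact disjoint_sdiff_right_of_card_le (by omega)

lemma card_le_card_filter_card_inter_mul {Z : Finset β} (hZ : #Z = m + e)
    (hmax : ∀ B ∈ 𝓑, #(Z ∩ B) ≤ m) (hcover : ∀ z ∈ Z, ∃ B ∈ 𝓑, m ≤ #(Z.erase z ∩ B)) :
    #Z ≤ #{B ∈ 𝓑 | #(Z ∩ B) = m} * e := by
  have hsub : Z ⊆ {B ∈ 𝓑 | #(Z ∩ B) = m}.biUnion (Z \ ·) := by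
    intro z hz
    obtain ⟨B, hB, hle⟩ := hcover z hz
    rw [erase_inter] at hle
    have hle' := hle.trans (card_le_card (erase_subset z (Z ∩ B)))
    have hzB : z ∉ B := fun hzB => by
      rw [card_erase_of_mem (mem_inter.2 ⟨hz, hzB⟩)] at hle
      have := hmax B hB
      have := card_pos.2 ⟨z, mem_inter.2 ⟨hz, hzB⟩⟩
      omega
    exact mem_biUnion.2 ⟨B, mem_filter.2 ⟨hB, (hmax B hB).antisymm hle'⟩, mem_sdiff.2 ⟨hz, hzB⟩⟩
  refine (card_le_card hsub).trans (card_biUnion_le_card_mul _ _ _ fun B hB => ?_)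
  have := card_inter_add_card_sdiff Z B
  rw [(mem_filter.1 hB).2, hZ] at this
  exact (Nat.add_left_cancel this).le

/-- Double counting of the blocks which meet `Z` in the largest possible number `m` of points. -/
lemma card_mul_le_card_compl_mul {𝓑 : Finset (Finset α)} {Z : Finset α} {d m e r : ℕ}
    (hd : ∀ B ∈ 𝓑, ∀ C ∈ 𝓑, B ≠ C → #(B ∩ C) ≤ d) (hk : ∀ B ∈ 𝓑, #B = m + r)
    (hZ : #Z = m + e) (hm : #Z + d ≤ 2 * m) (hmax : ∀ B ∈ 𝓑, #(Z ∩ B) ≤ m)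
    (hcover : ∀ z ∈ Z, ∃ B ∈ 𝓑, m ≤ #(Z.erase z ∩ B)) :
    #Z * r ≤ #Zᶜ * e :=
  calc #Z * r ≤ #{B ∈ 𝓑 | #(Z ∩ B) = m} * e * r :=
        Nat.mul_le_mul_right r (card_le_card_filter_card_inter_mul hZ hmax hcover)
    _ = #{B ∈ 𝓑 | #(Z ∩ B) = m} * r * e := by ring
    _ ≤ #Zᶜ * e := Nat.mul_le_mul_right e (card_filter_card_inter_mul_le hd hk hm)

end Packing

section Inequalities

/-- The quadratic in `m = k - d` whose larger root is the upper bound of the theorem. It is minus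
the coefficient of `D ^ 2` in `i ^ 2 * lloydQuadratic a e (i - 1) D` when `a = m - 2 * i + 1` and
`i * e = (a - 1) * (D + 1) + 3 * i`. -/
def kdQuadratic (i m : ℝ) : ℝ := (i - 2) * m ^ 2 - i * (3 * i - 2) * m + 2 * i ^ 2 * (i - 1)

lemma lloydQuadratic_le_of_le {a e e₀ x y : ℝ} (ha : 0 ≤ a) (hx : 1 ≤ x) (hy : 0 ≤ y)
    (he : 0 ≤ e) (hee : e₀ ≤ e) (hxe : e * x ≤ (y - 1) * (a + 1)) :
    lloydQuadratic a e x y ≤ lloydQuadratic a e₀ x y := by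
  have hslope : (x - 1) * (e + e₀ - 1) ≤ 2 * (a + 2) * y :=
    calc (x - 1) * (e + e₀ - 1) ≤ (x - 1) * (2 * e) :=
          mul_le_mul_of_nonneg_left (by linarith) (by linarith)
      _ ≤ 2 * (e * x) := by linarith
      _ ≤ 2 * ((y - 1) * (a + 1)) := by linarith
      _ ≤ 2 * (a + 2) * y := by linarith
  rw [lloydQuadratic, lloydQuadratic]
  linear_combination x * (e - e₀) * hslope

lemma lloydQuadratic_neg_of_eq {a D e i : ℝ} (hi : 3 ≤ i) (hD : i ≤ D) (ha : 1 ≤ a)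
    (he : i * e = (a - 1) * (D + 1) + 3 * i)
    (hQ : 0 ≤ kdQuadratic i (a + 2 * i - 1)) :
    lloydQuadratic a e (i - 1) D < 0 := by
  obtain ⟨b, rfl⟩ : ∃ b, a = b + 1 := ⟨a - 1, by ring⟩
  set P := ((i ^ 2 + 4 * i - 4) * b ^ 2 + (i ^ 3 + 20 * i ^ 2 - 16 * i) * b
    + (18 * i ^ 3 - 12 * i ^ 2)) * D - (i - 1) * (i - 2) * (b + 2 * i) * (b + 3 * i) with hP_def
  have hexpand : i ^ 2 * lloydQuadratic (b + 1) e (i - 1) D =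
      -(kdQuadratic i (b + 1 + 2 * i - 1) * D ^ 2 + P) := by
    rw [lloydQuadratic, kdQuadratic]
    linear_combination ((i - 1) * (i - 2) * (i * e + (b * (D + 1) + 3 * i) - i)
      - 2 * (b + 3) * i * (i - 1) * D) * he
  have hP : 0 < P := by
    obtain ⟨j, rfl⟩ : ∃ j, i = j + 3 := ⟨i - 3, by ring⟩
    obtain ⟨t, rfl⟩ : ∃ t, D = j + 3 + t := ⟨D - (j + 3), by ring⟩
    have hj : 0 ≤ j := by linarith
    have ht : 0 ≤ t := by linarith
    have hb : 0 ≤ b := by linarith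
    rw [hP_def]
    ring_nf
    positivity
  refine neg_of_mul_neg_right (a := i ^ 2) ?_ (sq_nonneg i)
  rw [hexpand, neg_lt_zero]
  exact add_pos_of_nonneg_of_pos (mul_nonneg hQ (sq_nonneg D)) hP

/-- The two bounds on `e` are the counting bounds for a design which is `β(i)` but not
`β(i - 1)`. -/
lemma lloydQuadratic_neg {a D e i : ℝ} (hi : 3 ≤ i) (hD : i ≤ D) (ha : 1 ≤ a)
    (hupper : e * (i - 1) ≤ (D - 1) * (a + 1)) (hlower : (a - 1) * (D + 1) + 3 * i ≤ i * e)
    (hQ : 0 ≤ kdQuadratic i (a + 2 * i - 1)) :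
    lloydQuadratic a e (i - 1) D < 0 := by
  set e₀ := ((a - 1) * (D + 1) + 3 * i) / i
  have hi₀ : 0 < i := by linarith
  have he₀ : i * e₀ = (a - 1) * (D + 1) + 3 * i := mul_div_cancel₀ _ hi₀.ne'
  have he₀_nonneg : 0 ≤ e₀ :=
    div_nonneg (add_nonneg (mul_nonneg (by linarith) (by linarith)) (by linarith)) hi₀.le
  have hle : e₀ ≤ e := le_of_mul_le_mul_left (he₀.trans_le hlower) hi₀
  exact (lloydQuadratic_le_of_le (by linarith) (by linarith) (by linarith)
    (he₀_nonneg.trans hle) hle hupper).trans_lt (lloydQuadratic_neg_of_eq hi hD ha he₀ hQ)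

lemma lt_of_quadratic_neg {a b c x : ℝ} (ha : 0 < a) (h : a * (x * x) + b * x + c < 0) :
    x < (-b + √(discrim a b c)) / (2 * a) := by
  rw [lt_div_iff₀ (by positivity)]
  have hsq : (2 * a * x + b) ^ 2 < discrim a b c := by
    rw [discrim]
    linear_combination 4 * a * h
  linarith [Real.lt_sqrt_of_sq_lt hsq]

lemma lt_of_kdQuadratic_neg {i m : ℝ} (hi : 2 < i)
    (h : kdQuadratic i m < 0) :
    m < i * (3 * i - 2 + √(i ^ 2 + 12 * i - 12)) / (2 * (i - 2)) := by
  have hdiscrim : discrim (i - 2) (-(i * (3 * i - 2))) (2 * i ^ 2 * (i - 1)) =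
      i ^ 2 * (i ^ 2 + 12 * i - 12) := by
    rw [discrim]; ring
  have hroot := lt_of_quadratic_neg (b := -(i * (3 * i - 2)))
    (c := 2 * i ^ 2 * (i - 1)) (x := m) (sub_pos.2 hi) (by rw [kdQuadratic] at h; linarith)
  rwa [hdiscrim, Real.sqrt_mul (sq_nonneg i), Real.sqrt_sq (by linarith), neg_neg,
    ← mul_add] at hroot

lemma kdQuadratic_nonneg_of_le {i m : ℝ} (hi : 8 ≤ i) (hm : 2 * i + 7 ≤ m) :
    0 ≤ kdQuadratic i m := by
  rw [kdQuadratic]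
  obtain ⟨j, rfl⟩ : ∃ j, i = 8 + j := ⟨i - 8, by ring⟩
  obtain ⟨t, rfl⟩ : ∃ t, m = 2 * (8 + j) + 7 + t := ⟨m - (2 * (8 + j) + 7), by ring⟩
  have hj : 0 ≤ j := by linarith
  have ht : 0 ≤ t := by linarith
  ring_nf
  positivity

end Inequalities

namespace IsBetaDesign

variable {𝓑 : Finset (Finset α)} {v k d i p : ℕ}

lemma exists_block (hB : IsBetaDesign 𝓑 v k d (p + 1)) {X : Finset α}
    (hX : #X = d + 2 * p + 1) : ∃ B ∈ 𝓑, d + p + 1 ≤ #(X ∩ B) := by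
  obtain ⟨B, ⟨hB𝓑, hle⟩, -⟩ := hB.2.2.2 X (by omega)
  exact ⟨B, hB𝓑, hle⟩

lemma isPerfectCode (hB : IsBetaDesign 𝓑 v k d (p + 1)) :
    IsPerfectCode 𝓑 (d + 2 * p + 1) p := by
  intro X hX
  refine ⟨?_, fun B hB𝓑 C hC𝓑 hBC => ?_⟩
  · obtain ⟨B, hB𝓑, hle⟩ := hB.exists_block hX
    have := card_inter_add_card_sdiff X B
    exact ⟨B, hB𝓑, by omega⟩
  · obtain ⟨-, -, -, -, -, hd, -⟩ := hB.1
    have hinter := hd B hB𝓑 C hC𝓑 hBC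
    have := card_inter_add_card_inter_le X B C
    have := card_inter_add_card_sdiff X B
    have := card_inter_add_card_sdiff X C
    omega

lemma add_le_blockSize (hB : IsBetaDesign 𝓑 v k d (p + 1)) : d + p + 1 ≤ k := by
  obtain ⟨⟨hv, -, -, -, hk, -, -⟩, -, hiv, -⟩ := id hB
  obtain ⟨X, -, hX⟩ := exists_subset_card_eq (s := (univ : Finset α)) (n := d + 2 * p + 1)
    (by rw [card_univ]; omega)
  obtain ⟨B, hB𝓑, hle⟩ := hB.exists_block hX
  exact hle.trans ((card_le_card inter_subset_right).trans_eq (hk B hB𝓑))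

/-- Two blocks cannot both meet a `(d + 2 * p - 1)`-set in `d + p` points, so only the existence of
a block can fail. -/
lemma exists_uncovered (hB : IsBetaDesign 𝓑 v k d (p + 1)) (hp : 1 ≤ p)
    (hnot : ¬ IsBetaDesign 𝓑 v k d p) :
    ∃ X : Finset α, #X + 1 = d + 2 * p ∧ ∀ B ∈ 𝓑, #(X ∩ B) + 1 ≤ d + p := by
  obtain ⟨hdesign, -, hiv, -⟩ := hB
  obtain ⟨-, -, -, -, -, hd, -⟩ := id hdesign
  by_contra! hcover
  refine hnot ⟨hdesign, hp, by omega, fun X hX => ?_⟩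
  obtain ⟨B, hB𝓑, hXB⟩ := hcover X (by omega)
  refine ⟨B, ⟨hB𝓑, by omega⟩, fun C hC => ?_⟩
  by_contra hCB
  have := hd C hC.1 B hB𝓑 hCB
  have := card_inter_add_card_inter_le X C B
  omega

lemma mul_le_of_not_isBetaDesign (hB : IsBetaDesign 𝓑 v k d (p + 1)) (hp : 1 ≤ p)
    (hnot : ¬ IsBetaDesign 𝓑 v k d p) :
    ((v : ℝ) - d - 2 * p) * p ≤ (d + 2 * p - 1) * (k - d - p) := by
  obtain ⟨X, hX, hXB⟩ := hB.exists_uncovered hp hnot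
  obtain ⟨hv, -, -, -, hk, hd, -⟩ := hB.1
  obtain ⟨m, hm⟩ : ∃ m, m + 1 = d + p := ⟨d + p - 1, by omega⟩
  obtain ⟨r, hr⟩ : ∃ r, k = m + 1 + r :=
    Nat.exists_eq_add_of_le (hm.trans_le (Nat.le_of_succ_le hB.add_le_blockSize))
  have hcount : #Xᶜ * p ≤ #X * r + p :=
    card_compl_mul_le hd (fun B hB𝓑 => (hk B hB𝓑).trans hr) (by omega) (by omega)
      (fun B hB𝓑 => by have := hXB B hB𝓑; omega)
      fun Y hY => by
        obtain ⟨B, hB𝓑, hle⟩ := hB.exists_block (X := Y) (by omega)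
        exact ⟨B, hB𝓑, by omega⟩
  have hXR : (#X : ℝ) = d + 2 * p - 1 := eq_sub_of_add_eq (by exact_mod_cast hX)
  have hXcR : (#Xᶜ : ℝ) = v - #X :=
    eq_sub_of_add_eq' (by exact_mod_cast (card_add_card_compl X).trans hv)
  have hrR : (r : ℝ) = k - d - p := by
    have hm' : (m : ℝ) + 1 = d + p := by exact_mod_cast hm
    have hr' : (k : ℝ) = m + 1 + r := by exact_mod_cast hr
    linarith
  have hcount' : (#Xᶜ : ℝ) * p ≤ #X * r + p := by exact_mod_cast hcount
  rw [hXcR, hXR, hrR] at hcount'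
  linarith

/-- The set consists of `d + p + 1` points of one block and `p + 1` points outside it. -/
lemma exists_card_inter_le (hB : IsBetaDesign 𝓑 v k d (p + 1)) (hv : 2 * k ≤ v) :
    ∃ Z : Finset α, #Z = d + 2 * p + 2 ∧ ∀ B ∈ 𝓑, #(Z ∩ B) ≤ d + p + 1 := by
  obtain ⟨hcard, htwo, -, -, hk, hd, -⟩ := hB.1
  have hdpk := hB.add_le_blockSize
  obtain ⟨B, hB𝓑⟩ : 𝓑.Nonempty := card_pos.1 (by omega)
  have hcompl := card_add_card_compl B
  rw [hk B hB𝓑, hcard] at hcompl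
  obtain ⟨Y, hYB, hY⟩ := exists_subset_card_eq (hdpk.trans_eq (hk B hB𝓑).symm)
  obtain ⟨W, hWB, hW⟩ := exists_subset_card_eq (s := Bᶜ) (n := p + 1) (by omega)
  have hdisj : Disjoint W B := (subset_compl_iff_disjoint_right ..).1 hWB
  have hZ : #(Y ∪ W) = d + 2 * p + 2 := by
    rw [card_union_of_disjoint (hdisj.symm.mono_left hYB), hY, hW]; ring
  have hZB : (Y ∪ W) ∩ B = Y := by
    rw [union_inter_distrib_right, inter_eq_left.2 hYB, disjoint_iff_inter_eq_empty.1 hdisj,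
      union_empty]
  refine ⟨Y ∪ W, hZ, fun C hC𝓑 => ?_⟩
  obtain rfl | hne := eq_or_ne C B
  · rw [hZB, hY]
  · have hinter := hd C hC𝓑 B hB𝓑 hne
    have hsum := card_inter_add_card_inter_le (Y ∪ W) C B
    rw [hZB] at hsum
    omega

lemma mul_le_mul_sub (hB : IsBetaDesign 𝓑 v k d (p + 1)) (hv : 2 * k ≤ v) :
    ((k : ℝ) - d - p - 1) * (d + 2 * p + 2) ≤ (p + 1) * (v - d - 2 * p - 2) := by
  obtain ⟨Z, hZ, hZB⟩ := hB.exists_card_inter_le hv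
  obtain ⟨hv, -, -, -, hk, hd, -⟩ := hB.1
  obtain ⟨r, hr⟩ : ∃ r, k = d + p + 1 + r := Nat.exists_eq_add_of_le hB.add_le_blockSize
  have hcount : #Z * r ≤ #Zᶜ * (p + 1) :=
    card_mul_le_card_compl_mul hd (fun B hB𝓑 => (hk B hB𝓑).trans hr) (by omega) (by omega) hZB
      fun z hz => hB.exists_block (by rw [card_erase_of_mem hz, hZ]; rfl)
  have hZR : (#Z : ℝ) = d + 2 * p + 2 := by exact_mod_cast hZ
  have hZcR : (#Zᶜ : ℝ) = v - #Z :=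
    eq_sub_of_add_eq' (by exact_mod_cast (card_add_card_compl Z).trans hv)
  have hrR : (k : ℝ) = d + p + 1 + r := by exact_mod_cast hr
  have hcount' : (#Z : ℝ) * r ≤ #Zᶜ * (p + 1) := by exact_mod_cast hcount
  rw [hZcR, hZR] at hcount'
  rw [hrR]
  linarith

lemma intersectionSize_mul_le (hB : IsBetaDesign 𝓑 v k d (p + 1)) (hp : 1 ≤ p)
    (hv : 2 * k ≤ v) (hnot : ¬ IsBetaDesign 𝓑 v k d p) : (d : ℝ) * p ≤ (d - 1) * (k - d - p) := by
  have hvR : 2 * (k : ℝ) ≤ v := by exact_mod_cast hv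
  linarith [hB.mul_le_of_not_isBetaDesign hp hnot,
    mul_le_mul_of_nonneg_right hvR (p.cast_nonneg (α := ℝ))]

lemma intersectionSize_pos (hB : IsBetaDesign 𝓑 v k d (p + 1)) (hp : 1 ≤ p) (hv : 2 * k ≤ v)
    (hnot : ¬ IsBetaDesign 𝓑 v k d p) : 1 ≤ d := by
  by_contra! hd
  obtain rfl : d = 0 := Nat.lt_one_iff.1 hd
  have hpk : ((0 : ℕ) : ℝ) + p + 1 ≤ k := by exact_mod_cast hB.add_le_blockSize
  have := hB.intersectionSize_mul_le hp hv hnot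
  push_cast at this hpk
  linarith

lemma add_two_mul_add_one_le (hB : IsBetaDesign 𝓑 v k d (p + 1)) (hp : 1 ≤ p)
    (hv : 2 * k ≤ v) (hnot : ¬ IsBetaDesign 𝓑 v k d p) : d + 2 * p + 1 ≤ k := by
  by_contra! hk
  have hkR : (k : ℝ) - d - p ≤ p := by
    have : (k : ℝ) ≤ d + 2 * p := by exact_mod_cast Nat.le_of_lt_succ hk
    linarith
  have hdR : (1 : ℝ) ≤ d := by exact_mod_cast hB.intersectionSize_pos hp hv hnot
  have hpR : (1 : ℝ) ≤ p := by exact_mod_cast hp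
  linarith [hB.intersectionSize_mul_le hp hv hnot,
    mul_le_mul_of_nonneg_left hkR (sub_nonneg.2 hdR)]

/-- Otherwise the counting bounds contradict `IsPerfectCode.lloyd_antepenultimate_nonneg`. -/
lemma kdQuadratic_neg (hB : IsBetaDesign 𝓑 v k d (p + 1)) (hp : 2 ≤ p) (hv : 2 * k ≤ v)
    (hnot : ¬ IsBetaDesign 𝓑 v k d p) {i m : ℝ} (hi : i = p + 1) (hm : m = k - d) :
    kdQuadratic i m < 0 := by
  have hp₁ : 1 ≤ p := one_le_two.trans hp
  have hkd := hB.add_two_mul_add_one_le hp₁ hv hnot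
  have hd : (1 : ℝ) ≤ d := by exact_mod_cast hB.intersectionSize_pos hp₁ hv hnot
  have hp' : (2 : ℝ) ≤ p := by exact_mod_cast hp
  have hcount₁ := hB.mul_le_of_not_isBetaDesign hp₁ hnot
  have hcount₂ := hB.mul_le_mul_sub hv
  obtain ⟨hcard, htwo, -, -, hk, -⟩ := hB.1
  obtain hkd | hkd := hkd.eq_or_lt
  · have hm' : m = 2 * i - 1 := by rw [hm, hi, ← hkd]; push_cast; ring
    rw [hm', kdQuadratic]
    linarith [mul_nonneg (a := i) (b := i - 1) (by linarith) (by linarith)]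
  · have ha : (d : ℝ) + 2 * p + 1 + 1 ≤ k := by exact_mod_cast hkd
    by_contra! hQ
    have hneg := lloydQuadratic_neg (a := k - d - 2 * p - 1) (D := d + p)
      (e := v - k - d - 2 * p + 1) (i := i) (by linarith) (by linarith) (by linarith)
      (by rw [hi]; linarith) (by rw [hi]; linarith) (by
        rwa [show (k : ℝ) - d - 2 * p - 1 + 2 * i - 1 = m by rw [hm, hi]; ring])
    have hnonneg := hB.isPerfectCode.lloyd_antepenultimate_nonneg (n := d + 2 * p)
      (a := k - d - 2 * p - 1) (q := v - k) (card_pos.1 (by omega)) hk (by omega) hkd.le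
      (by omega) (by omega) (by omega) (by push_cast; ring) (by rw [hcard])
      (by push_cast; linarith)
    refine hneg.not_ge (le_of_le_of_eq hnonneg ?_)
    rw [hi]; push_cast; congr 1 <;> ring

end IsBetaDesign

/-- **Theorem 4 (1).** Let `𝓑` be a `β(i)` design with parameter `(v, k, d)`, `i ≥ 3`
and `v ≥ 2k`.  If `𝓑` is not a `β(i-1)` design, then
`2(i-1) ≤ k - d < i(3i - 2 + √(i² + 12i - 12))/(2(i-2))`; in particular
`2(i-1) ≤ k - d ≤ 2i + 6` for `i ≥ 8`. -/
theorem beta_design_kd_upper (𝓑 : Finset (Finset α)) (v k d i : ℕ)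
    (hB : IsBetaDesign 𝓑 v k d i) (hi : 3 ≤ i) (hv : 2 * k ≤ v)
    (hnot : ¬ IsBetaDesign 𝓑 v k d (i - 1)) :
    2 * (i - 1) ≤ k - d ∧
    ((k : ℝ) - (d : ℝ) <
      (i : ℝ) * (3 * (i : ℝ) - 2 + Real.sqrt ((i : ℝ) ^ 2 + 12 * (i : ℝ) - 12))
        / (2 * ((i : ℝ) - 2))) ∧
    (8 ≤ i → k - d ≤ 2 * i + 6) := by
  obtain ⟨p, rfl⟩ : ∃ p, i = p + 1 := ⟨i - 1, by omega⟩
  rw [Nat.add_sub_cancel] at hnot ⊢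
  have hkd : d + 2 * p + 1 ≤ k := hB.add_two_mul_add_one_le (by omega) hv hnot
  have hquadratic := hB.kdQuadratic_neg (by omega) hv hnot (Nat.cast_succ p) rfl
  have hi' : (3 : ℝ) ≤ (p + 1 : ℕ) := by exact_mod_cast hi
  refine ⟨by omega, lt_of_kdQuadratic_neg (by linarith) hquadratic, fun hi₈ => ?_⟩
  by_contra! hlarge
  refine hquadratic.not_ge (kdQuadratic_nonneg_of_le (by exact_mod_cast hi₈) ?_)
  rw [← Nat.cast_sub (by omega)]
  exact_mod_cast hlarge
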